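/- arXiv:1703.09188 — 2 statements merged into one kernel-verified Lean document; each statement's English description precedes it below -/
import Mathlib

section
/- The brickwork MPUs satisfy conj(U^{(N)}[u,v]) = U^{(N)}[u,v] for all N ≥ 1 if and only if there exist unitary matrices x (of size ℓ×ℓ) and y (of size r×r), either both symmetric (x = xᵀ and y = yᵀ) or both skew-symmetric (x = −xᵀ and y = −yᵀ), such that conj(u) = (x⊗y)·u and conj(v) = v·(y†⊗x†). -/
/-!
Put `A = u uᵀ` and `B = v† conj(v)`. The ring operator factors as `V * U`, where `U` is the
tensor power of `u` and `V` is the tensor power of `v` conjugated by the shift of the ring by one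
spin (`brickwork_eq`). By unitarity, invariance under complex conjugation at size `N` says that
`A^{⊗N}` equals the shifted `B^{⊗N}` (`key_identity`).

For `N = 1` this reads `B = swap(A)`. For `N = 2` it reads `A₁₂ A₃₄ = B₂₃ B₄₁`; fixing a nonzero
matrix entry of `A` on spins `3, 4` shows that `A` is a product `a ⊗ b` (`exists_factor`). Since `A`
is unitary, `a` and `b` can be rescaled to unitaries (`exists_unitary_factor`), and since `A` is
symmetric, `aᵀ = λ a` and `bᵀ = λ⁻¹ b` with `λ² = 1` (`symm_or_skew`). Then `x = a†`, `y = b†`.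
Conversely, the factors `x ⊗ y` and `y† ⊗ x†` cancel around the ring.
-/

open scoped Kronecker Matrix

/-- The cyclic successor on `Fin N`. -/
def nextIdx {N : ℕ} (n : Fin N) : Fin N := ⟨(n.val + 1) % N, Nat.mod_lt _ n.pos⟩

/-- The brickwork MPU `U^{(N)}[u,v]` on a ring of `2N` spins of dimension `d` (site `n`
carries the pair of spins `(2n-1, 2n)`): first `u` is applied to every pair `(2n-1,2n)`,
then `v` to every pair `(2n,2n+1)` (cyclically). -/
noncomputable def brickwork (d l r : ℕ)
    (u : Matrix (Fin l × Fin r) (Fin d × Fin d) ℂ)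
    (v : Matrix (Fin d × Fin d) (Fin r × Fin l) ℂ) (N : ℕ) :
    Matrix (Fin N → Fin d × Fin d) (Fin N → Fin d × Fin d) ℂ :=
  Matrix.of fun x y =>
    ∑ z : Fin N → Fin l × Fin r,
      (∏ n : Fin N, v ((x n).2, (x (nextIdx n)).1) ((z n).2, (z (nextIdx n)).1)) *
      (∏ n : Fin N, u (z n) (y n))

/-- The tensor power `m^{⊗N}`, with rows and columns indexed by configurations. -/
noncomputable def piMat {α β : Type*} (N : ℕ) (m : Matrix α β ℂ) :
    Matrix (Fin N → α) (Fin N → β) ℂ :=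
  Matrix.of fun x y => ∏ n, m (x n) (y n)

theorem piMat_mul {α β γ : Type*} [Fintype β] (N : ℕ) (m : Matrix α β ℂ) (k : Matrix β γ ℂ) :
    piMat N m * piMat N k = piMat N (m * k) := by
  ext x y
  simp only [piMat, Matrix.mul_apply, Matrix.of_apply, ← Finset.prod_mul_distrib]
  rw [Finset.prod_univ_sum, Fintype.piFinset_univ]

theorem piMat_one {α : Type*} [DecidableEq α] (N : ℕ) :
    piMat N (1 : Matrix α α ℂ) = 1 := by
  ext x y
  simp only [piMat, Matrix.of_apply, Matrix.one_apply, Finset.prod_ite_zero, funext_iff]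
  simp

theorem piMat_map {α β : Type*} (N : ℕ) (m : Matrix α β ℂ) :
    (piMat N m).map (starRingEnd ℂ) = piMat N (m.map (starRingEnd ℂ)) := by
  ext x y
  simp [piMat]

theorem nextIdx_injective {N : ℕ} : Function.Injective (nextIdx (N := N)) := by
  intro a b h
  have h' : (a.val + 1) ≡ (b.val + 1) [MOD N] := congrArg Fin.val h
  have h2 := Nat.ModEq.add_right_cancel' 1 h'
  exact Fin.ext (Nat.ModEq.eq_of_lt_of_lt h2 a.2 b.2)

/-- `nextIdx` as a permutation of `Fin N`. -/
noncomputable def nextEquiv (N : ℕ) : Fin N ≃ Fin N :=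
  Equiv.ofBijective nextIdx (Finite.injective_iff_bijective.mp nextIdx_injective)

/-- Regrouping of the ring: the pairs `(2n-1, 2n)` are replaced by the pairs `(2n, 2n+1)`. -/
noncomputable def shiftE (N : ℕ) (α β : Type*) : (Fin N → α × β) ≃ (Fin N → β × α) where
  toFun z n := ((z n).2, (z (nextEquiv N n)).1)
  invFun w n := ((w ((nextEquiv N).symm n)).2, (w n).1)
  left_inv z := by ext n <;> simp
  right_inv w := by ext n <;> simp

theorem shiftE_apply {N : ℕ} {α β : Type*} (z : Fin N → α × β) (n : Fin N) :
    shiftE N α β z n = ((z n).2, (z (nextIdx n)).1) := rfl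

/-- The tensor power of a two-spin gate acting on the pairs `(2n, 2n+1)`. -/
noncomputable def shMat {α β γ δ : Type*} (N : ℕ) (m : Matrix (β × α) (δ × γ) ℂ) :
    Matrix (Fin N → α × β) (Fin N → γ × δ) ℂ :=
  (piMat N m).submatrix (shiftE N α β) (shiftE N γ δ)

theorem shMat_mul {α β γ δ ε ζ : Type*} [Fintype γ] [Fintype δ] (N : ℕ)
    (m : Matrix (β × α) (δ × γ) ℂ) (k : Matrix (δ × γ) (ζ × ε) ℂ) :
    shMat N m * shMat N k = shMat N (m * k) := by
  simp only [shMat, Matrix.submatrix_mul_equiv, piMat_mul]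

theorem shMat_one {α β : Type*} [DecidableEq α] [DecidableEq β] (N : ℕ) :
    shMat N (1 : Matrix (β × α) (β × α) ℂ) = 1 := by
  simp only [shMat, piMat_one, Matrix.submatrix_one_equiv]

theorem shMat_map {α β γ δ : Type*} (N : ℕ) (m : Matrix (β × α) (δ × γ) ℂ) :
    (shMat N m).map (starRingEnd ℂ) = shMat N (m.map (starRingEnd ℂ)) := by
  rw [shMat, shMat, ← piMat_map]; rfl

/-- A tensor power of a product gate does not depend on how the ring is grouped into pairs. -/
theorem shMat_kronecker {α β : Type*} (N : ℕ) (a : Matrix α α ℂ) (b : Matrix β β ℂ) :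
    shMat N (b ⊗ₖ a) = piMat N (a ⊗ₖ b) := by
  ext x y
  simp only [shMat, piMat, Matrix.submatrix_apply, Matrix.of_apply, Matrix.kroneckerMap_apply,
    shiftE_apply, Finset.prod_mul_distrib]
  rw [mul_comm]
  congr 1
  exact Equiv.prod_comp (nextEquiv N) fun n => a (x n).1 (y n).1

theorem brickwork_eq (d l r : ℕ) (u : Matrix (Fin l × Fin r) (Fin d × Fin d) ℂ)
    (v : Matrix (Fin d × Fin d) (Fin r × Fin l) ℂ) (N : ℕ) :
    brickwork d l r u v N = shMat N v * piMat N u := by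
  ext x y
  simp only [brickwork, shMat, piMat, Matrix.mul_apply, Matrix.submatrix_apply, Matrix.of_apply,
    shiftE_apply]

theorem map_mul_conj {α β γ : Type*} [Fintype β] (m : Matrix α β ℂ) (k : Matrix β γ ℂ) :
    (m * k).map (starRingEnd ℂ) = m.map (starRingEnd ℂ) * k.map (starRingEnd ℂ) :=
  Matrix.map_mul

theorem conj_mul_transpose (d l r : ℕ) (u : Matrix (Fin l × Fin r) (Fin d × Fin d) ℂ)
    (hu2 : u * uᴴ = 1) : u.map (starRingEnd ℂ) * uᵀ = 1 := by
  have h := congrArg (fun m => m.map (starRingEnd ℂ)) hu2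
  simp only [map_mul_conj] at h
  have h1 : uᴴ.map (starRingEnd ℂ) = uᵀ := by ext i j; simp
  rw [h1] at h
  rw [h]
  exact Matrix.map_one _ (map_zero _) (map_one _)

/-- Conjugation invariance at size `N`, with all unitaries brought to one side. -/
theorem key_identity (d l r : ℕ) (u : Matrix (Fin l × Fin r) (Fin d × Fin d) ℂ)
    (hu2 : u * uᴴ = 1) (v : Matrix (Fin d × Fin d) (Fin r × Fin l) ℂ) (hv1 : vᴴ * v = 1) (N : ℕ)
    (h : (brickwork d l r u v N).map (starRingEnd ℂ) = brickwork d l r u v N) :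
    shMat N (vᴴ * v.map (starRingEnd ℂ)) = piMat N (u * uᵀ) := by
  rw [brickwork_eq, map_mul_conj, shMat_map, piMat_map] at h
  have h2 := congrArg (fun m => shMat N vᴴ * m * piMat N uᵀ) h
  rw [← Matrix.mul_assoc, ← Matrix.mul_assoc, shMat_mul, shMat_mul, hv1, shMat_one,
    Matrix.one_mul, Matrix.mul_assoc, piMat_mul, piMat_mul, conj_mul_transpose d l r u hu2,
    piMat_one, Matrix.mul_one] at h2
  exact h2

/-- The identities at `N = 1` and `N = 2` force `A` to be a product. -/
theorem exists_factor {α β : Type*} (A : Matrix (α × β) (α × β) ℂ) (B : Matrix (β × α) (β × α) ℂ)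
    (hA : A ≠ 0) (h1 : shMat 1 B = piMat 1 A) (h2 : shMat 2 B = piMat 2 A) :
    ∃ (a : Matrix α α ℂ) (b : Matrix β β ℂ), A = a ⊗ₖ b ∧ B = b ⊗ₖ a := by
  have e1 : ∀ p q : α × β, B (p.2, p.1) (q.2, q.1) = A p q := by
    intro p q
    have := congrFun (congrFun h1 fun _ => p) fun _ => q
    simpa [shMat, piMat, shiftE_apply] using this
  have e2 : ∀ p q p' q' : α × β,
      B (p.2, p'.1) (q.2, q'.1) * B (p'.2, p.1) (q'.2, q.1) = A p q * A p' q' := by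
    intro p q p' q'
    have := congrFun (congrFun h2 ![p, p']) ![q, q']
    simpa [shMat, piMat, shiftE_apply, Fin.prod_univ_two, nextIdx] using this
  obtain ⟨p', q', hc⟩ : ∃ p' q', A p' q' ≠ 0 := by
    by_contra! hne
    exact hA (by ext p q; exact hne p q)
  have eA : ∀ p q : α × β, A p q =
      B (p'.2, p.1) (q'.2, q.1) * (B (p.2, p'.1) (q.2, q'.1) / A p' q') := by
    intro p q
    have := e2 p q p' q'
    field_simp
    rw [← this, mul_comm]
  refine ⟨Matrix.of fun i i' => B (p'.2, i) (q'.2, i'),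
    Matrix.of fun j j' => B (j, p'.1) (j', q'.1) / A p' q', ?_, ?_⟩
  · ext p q
    exact eA p q
  · ext ⟨j, i⟩ ⟨j', i'⟩
    rw [e1 (i, j) (i', j'), eA]
    simp [mul_comm]

/-- The factors of a unitary product `a ⊗ b` can be rescaled inversely to each other so that both
become unitary: `b b†` is a positive multiple of `1`, and its square root is the scale. -/
theorem exists_unitary_factor {l r : ℕ} (hl : 1 ≤ l) (hr : 1 ≤ r) (a : Matrix (Fin l) (Fin l) ℂ)
    (b : Matrix (Fin r) (Fin r) ℂ) (h : (a ⊗ₖ b) * (a ⊗ₖ b)ᴴ = 1) :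
    ∃ c : ℂ, c ≠ 0 ∧ (c • a) * (c • a)ᴴ = 1 ∧ (c⁻¹ • b) * (c⁻¹ • b)ᴴ = 1 := by
  rw [Matrix.conjTranspose_kronecker, ← Matrix.mul_kronecker_mul] at h
  have he : ∀ i i' j j', (a * aᴴ) i i' * (b * bᴴ) j j' =
      (1 : Matrix (Fin l) (Fin l) ℂ) i i' * (1 : Matrix (Fin r) (Fin r) ℂ) j j' := by
    intro i i' j j'
    have := congrFun (congrFun h (i, j)) (i', j')
    rw [← Matrix.one_kronecker_one] at this
    exact this
  let i0 : Fin l := ⟨0, hl⟩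
  let j0 : Fin r := ⟨0, hr⟩
  obtain ⟨t, ht0, ht⟩ : ∃ t : ℝ, 0 ≤ t ∧ (b * bᴴ) j0 j0 = (t : ℂ) := by
    refine ⟨∑ k, Complex.normSq (b j0 k), Finset.sum_nonneg fun _ _ => Complex.normSq_nonneg _, ?_⟩
    simp [Matrix.mul_apply, Complex.mul_conj]
  have h00 := he i0 i0 j0 j0
  rw [ht] at h00
  simp only [Matrix.one_apply_eq, mul_one] at h00
  have htc : (t : ℂ) ≠ 0 := right_ne_zero_of_mul (h00 ▸ one_ne_zero)
  have hs : ((√t : ℝ) : ℂ) * ((√t : ℝ) : ℂ) = t := by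
    rw [← Complex.ofReal_mul, Real.mul_self_sqrt ht0]
  have hs0 : ((√t : ℝ) : ℂ) ≠ 0 := fun h0 => htc (by rw [← hs, h0, zero_mul])
  refine ⟨((√t : ℝ) : ℂ), hs0, ?_, ?_⟩
  · ext i i'
    have := he i i' j0 j0
    rw [ht, Matrix.one_apply_eq, mul_one] at this
    rw [Matrix.conjTranspose_smul, Matrix.smul_mul, Matrix.mul_smul, smul_smul, Matrix.smul_apply,
      ← this]
    simp [hs, mul_comm]
  · ext j j'
    have := he i0 i0 j j'
    rw [Matrix.one_apply_eq, one_mul] at this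
    have h3 : (a * aᴴ) i0 i0 = (t : ℂ)⁻¹ := eq_inv_of_mul_eq_one_left h00
    rw [Matrix.conjTranspose_smul, Matrix.smul_mul, Matrix.mul_smul, smul_smul, Matrix.smul_apply,
      ← this, h3, ← hs]
    simp

theorem exists_ne_zero_of_unitary {l : ℕ} (hl : 1 ≤ l) (a : Matrix (Fin l) (Fin l) ℂ)
    (h : a * aᴴ = 1) : ∃ i i', a i i' ≠ 0 := by
  by_contra! hne
  have ha : a = 0 := by ext i j; exact hne i j
  have := congrFun (congrFun h ⟨0, hl⟩) ⟨0, hl⟩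
  simp [ha] at this

/-- If `a ⊗ b` is symmetric and nonzero, then `a` and `b` are both symmetric or both skew. -/
theorem symm_or_skew {α β : Type*} (a : Matrix α α ℂ) (b : Matrix β β ℂ)
    (ha : ∃ i i', a i i' ≠ 0) (hb : ∃ j j', b j j' ≠ 0) (h : (a ⊗ₖ b)ᵀ = a ⊗ₖ b) :
    (a = aᵀ ∧ b = bᵀ) ∨ (a = -aᵀ ∧ b = -bᵀ) := by
  have he : ∀ i i' j j', a i' i * b j' j = a i i' * b j j' := fun i i' j j' =>
    congrFun (congrFun h (i, j)) (i', j')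
  obtain ⟨i, i', hi⟩ := ha
  obtain ⟨j, j', hj⟩ := hb
  obtain ⟨c, hc⟩ : ∃ c, ∀ k k', a k k' = c * a k' k := by
    refine ⟨b j' j / b j j', fun k k' => ?_⟩
    have := he k k' j j'
    field_simp
    linear_combination -this
  have hcc : (c - 1) * (c + 1) = 0 := by
    have h1 : a i i' = c * (c * a i i') := by
      rw [← hc i' i]; exact hc i i'
    refine mul_right_cancel₀ hi ?_
    linear_combination -h1
  rcases mul_eq_zero.mp hcc with h1 | h1
  · left
    have hc1 : c = 1 := by linear_combination h1
    subst hc1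
    refine ⟨by ext k k'; simpa using hc k k', ?_⟩
    ext k k'
    have h3 := he i i' k k'
    have h4 := hc i i'
    refine mul_left_cancel₀ hi ?_
    simp only [Matrix.transpose_apply]
    linear_combination -h3 - h4 * b k' k
  · right
    have hc1 : c = -1 := by linear_combination h1
    subst hc1
    refine ⟨by ext k k'; simpa using hc k k', ?_⟩
    ext k k'
    have h3 := he i i' k k'
    have h4 := hc i i'
    refine mul_left_cancel₀ hi ?_
    simp only [Matrix.transpose_apply, Matrix.neg_apply]
    linear_combination -h3 + h4 * b k' k

/-- The brickwork MPUs generated by `(u,v)` are invariant under complex conjugation for all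
`N ≥ 1` iff there exist unitaries `x`, `y`, either both symmetric or both skew-symmetric,
with `conj u = (x⊗y)u` and `conj v = v(y†⊗x†)`. -/
theorem stmt11 (d l r : ℕ) (hd : 1 ≤ d) (hl : 1 ≤ l) (hr : 1 ≤ r) (hrl : r * l = d ^ 2)
    (u : Matrix (Fin l × Fin r) (Fin d × Fin d) ℂ)
    (hu1 : uᴴ * u = 1) (hu2 : u * uᴴ = 1)
    (v : Matrix (Fin d × Fin d) (Fin r × Fin l) ℂ)
    (hv1 : vᴴ * v = 1) (hv2 : v * vᴴ = 1) :
    (∀ N : ℕ, 1 ≤ N →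
        (brickwork d l r u v N).map (starRingEnd ℂ) = brickwork d l r u v N) ↔
    (∃ (x : Matrix (Fin l) (Fin l) ℂ) (y : Matrix (Fin r) (Fin r) ℂ),
      x ∈ Matrix.unitaryGroup (Fin l) ℂ ∧ y ∈ Matrix.unitaryGroup (Fin r) ℂ ∧
      ((x = xᵀ ∧ y = yᵀ) ∨ (x = -xᵀ ∧ y = -yᵀ)) ∧
      u.map (starRingEnd ℂ) = (x ⊗ₖ y) * u ∧
      v.map (starRingEnd ℂ) = v * (yᴴ ⊗ₖ xᴴ)) := by
  constructor
  · intro h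
    have k1 := key_identity d l r u hu2 v hv1 1 (h 1 le_rfl)
    have k2 := key_identity d l r u hu2 v hv1 2 (h 2 one_le_two)
    have hconj : (uᵀ)ᴴ = u.map (starRingEnd ℂ) := by ext i j; simp
    have hAH : (u * uᵀ)ᴴ = u.map (starRingEnd ℂ) * uᴴ := by
      rw [Matrix.conjTranspose_mul, hconj]
    have hAA : (u * uᵀ) * (u * uᵀ)ᴴ = 1 := by
      have h3 : uᵀ * u.map (starRingEnd ℂ) = 1 := by
        have := congrArg Matrix.transpose hu1
        rw [Matrix.transpose_mul, Matrix.transpose_one] at this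
        exact this
      rw [hAH, Matrix.mul_assoc, ← Matrix.mul_assoc uᵀ, h3, Matrix.one_mul, hu2]
    have hA0 : u * uᵀ ≠ 0 := by
      intro h0
      rw [h0, Matrix.zero_mul] at hAA
      have := congrFun (congrFun hAA (⟨0, hl⟩, ⟨0, hr⟩)) (⟨0, hl⟩, ⟨0, hr⟩)
      simp at this
    obtain ⟨a₀, b₀, hA, hB⟩ := exists_factor _ _ hA0 k1 k2
    obtain ⟨c, hc, ha, hb⟩ := exists_unitary_factor hl hr a₀ b₀ (by rw [← hA, hAA])
    have hA' : u * uᵀ = (c • a₀) ⊗ₖ (c⁻¹ • b₀) := by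
      rw [hA, Matrix.smul_kronecker, Matrix.kronecker_smul, smul_smul, mul_inv_cancel₀ hc, one_smul]
    have hB' : vᴴ * v.map (starRingEnd ℂ) = (c⁻¹ • b₀) ⊗ₖ (c • a₀) := by
      rw [hB, Matrix.smul_kronecker, Matrix.kronecker_smul, smul_smul, inv_mul_cancel₀ hc, one_smul]
    generalize c • a₀ = a at *
    generalize c⁻¹ • b₀ = b at *
    have hsym := symm_or_skew a b (exists_ne_zero_of_unitary hl a ha)
      (exists_ne_zero_of_unitary hr b hb)
      (by rw [← hA', Matrix.transpose_mul, Matrix.transpose_transpose])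
    refine ⟨aᴴ, bᴴ, ?_, ?_, ?_, ?_, ?_⟩
    · rw [Matrix.mem_unitaryGroup_iff']
      simpa [Matrix.star_eq_conjTranspose] using ha
    · rw [Matrix.mem_unitaryGroup_iff']
      simpa [Matrix.star_eq_conjTranspose] using hb
    · rcases hsym with ⟨h1, h2⟩ | ⟨h1, h2⟩
      · left
        exact ⟨congrArg Matrix.conjTranspose h1, congrArg Matrix.conjTranspose h2⟩
      · right
        constructor
        · have := congrArg Matrix.conjTranspose h1
          rwa [Matrix.conjTranspose_neg] at this
        · have := congrArg Matrix.conjTranspose h2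
          rwa [Matrix.conjTranspose_neg] at this
    · rw [← Matrix.conjTranspose_kronecker, ← hA', hAH, Matrix.mul_assoc, hu1, Matrix.mul_one]
    · rw [Matrix.conjTranspose_conjTranspose, Matrix.conjTranspose_conjTranspose, ← hB',
        ← Matrix.mul_assoc, hv2, Matrix.one_mul]
  · rintro ⟨x, y, hx, hy, -, hu, hv⟩ N -
    rw [brickwork_eq, map_mul_conj, shMat_map, piMat_map, hu, hv, ← shMat_mul, ← piMat_mul,
      shMat_kronecker, Matrix.mul_assoc, ← Matrix.mul_assoc (piMat N (xᴴ ⊗ₖ yᴴ)), piMat_mul,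
      ← Matrix.mul_kronecker_mul]
    rw [Matrix.mem_unitaryGroup_iff', Matrix.star_eq_conjTranspose] at hx hy
    rw [hx, hy, Matrix.one_kronecker_one, piMat_one, Matrix.one_mul]
end

section
/- Suppose there exist a unitary x on ℂ^d⊗ℂ^d and σ ∈ {+1,−1} with v₂₃·u₁₂·u₃₄ = σ·x₁₂·(x†)₃₄·(v†)₂₃. Then: (a) σ = (1/d²)·Tr[𝕊_{12,34} · v₂₃ · u₁₂ · u₃₄ · v₂₃]; in particular σ is uniquely determined by the pair (u,v); (b) σ is unchanged if (u,v) is replaced by ((p⊗q)u, v(q†⊗p†)) for any unitaries p, q on ℂ^d; (c) if (u(t),v(t)), t ∈ [0,1], is a continuous path of pairs of unitaries on ℂ^d⊗ℂ^d, each satisfying such a relation with some unitary x(t) and σ(t) ∈ {±1}, then σ(t) is constant on [0,1]. -/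
open scoped Kronecker Matrix

/-- `w₁₂ = w ⊗ 1 ⊗ 1` acting on the first two of four factors. -/
noncomputable def lay12 {α : Type*} [Fintype α] [DecidableEq α]
    (w : Matrix (α × α) (α × α) ℂ) :
    Matrix ((α × α) × α × α) ((α × α) × α × α) ℂ :=
  w ⊗ₖ (1 : Matrix (α × α) (α × α) ℂ)

/-- `w₃₄ = 1 ⊗ 1 ⊗ w` acting on the last two of four factors. -/
noncomputable def lay34 {α : Type*} [Fintype α] [DecidableEq α]
    (w : Matrix (α × α) (α × α) ℂ) :
    Matrix ((α × α) × α × α) ((α × α) × α × α) ℂ :=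
  (1 : Matrix (α × α) (α × α) ℂ) ⊗ₖ w

/-- `w₂₃ = 1 ⊗ w ⊗ 1` acting on the middle two of four factors. -/
noncomputable def lay23 {α : Type*} [Fintype α] [DecidableEq α]
    (w : Matrix (α × α) (α × α) ℂ) :
    Matrix ((α × α) × α × α) ((α × α) × α × α) ℂ :=
  Matrix.of fun p q =>
    if p.1.1 = q.1.1 ∧ p.2.2 = q.2.2 then w (p.1.2, p.2.1) (q.1.2, q.2.1) else 0

/-- The swap `𝕊_{12,34}` exchanging the pair of factors `(1,2)` with the pair `(3,4)`. -/
noncomputable def swapPairs (α : Type*) [Fintype α] [DecidableEq α] :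
    Matrix ((α × α) × α × α) ((α × α) × α × α) ℂ :=
  Matrix.of fun p q => if p.1 = q.2 ∧ p.2 = q.1 then 1 else 0

/-- The time-reversal relation `v₂₃ u₁₂ u₃₄ = σ x₁₂ (x†)₃₄ (v†)₂₃`. -/
def TRrel {α : Type*} [Fintype α] [DecidableEq α]
    (u v x : Matrix (α × α) (α × α) ℂ) (σ : ℂ) : Prop :=
  lay23 v * lay12 u * lay34 u = σ • (lay12 x * lay34 xᴴ * lay23 vᴴ)

/-!
The relation, multiplied on the right by `v₂₃`, reads `v₂₃ u₁₂ u₃₄ v₂₃ = σ x₁₂ (x†)₃₄`, and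
`Tr[𝕊 (x ⊗ x†)] = Tr[x x†] = d²`; this gives the trace formula (a). For (b), the witness is
`x' = (p ⊗ 1) x (1 ⊗ q†)`: the inner gauge factors cancel, and the outer ones `p₁`, `q₄` commute
with `v₂₃`. For (c), the trace formula shows that `σ` is continuous along the path, and a
continuous `{1, -1}`-valued function on an interval is constant.
-/

section Layers

variable {α : Type*} [Fintype α] [DecidableEq α]

lemma lay12_mul_lay34 (a b : Matrix (α × α) (α × α) ℂ) : lay12 a * lay34 b = a ⊗ₖ b := by
  simp [lay12, lay34, ← Matrix.mul_kronecker_mul]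

/-- Regrouping of the four factors that puts the middle pair first: `(12)(34) ↦ (23)(14)`. -/
def middleFirst (α : Type*) : ((α × α) × α × α) ≃ ((α × α) × α × α) where
  toFun p := ((p.1.2, p.2.1), (p.1.1, p.2.2))
  invFun p := ((p.2.1, p.1.1), (p.1.2, p.2.2))
  left_inv _ := rfl
  right_inv _ := rfl

lemma lay23_eq (w : Matrix (α × α) (α × α) ℂ) :
    lay23 w = (w ⊗ₖ (1 : Matrix (α × α) (α × α) ℂ)).submatrix (middleFirst α) (middleFirst α) := by
  ext ⟨⟨a, b⟩, c, e⟩ ⟨⟨a', b'⟩, c', e'⟩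
  simp [lay23, middleFirst, Matrix.one_apply]

lemma lay23_mul (a b : Matrix (α × α) (α × α) ℂ) : lay23 (a * b) = lay23 a * lay23 b := by
  simp [lay23_eq, Matrix.submatrix_mul_equiv, ← Matrix.mul_kronecker_mul]

lemma lay23_one : lay23 (1 : Matrix (α × α) (α × α) ℂ) = 1 := by
  simp [lay23_eq]

lemma lay23_kronecker (q p : Matrix α α ℂ) :
    lay23 (q ⊗ₖ p) = ((1 : Matrix α α ℂ) ⊗ₖ q) ⊗ₖ (p ⊗ₖ (1 : Matrix α α ℂ)) := by
  ext ⟨⟨a, b⟩, c, e⟩ ⟨⟨a', b'⟩, c', e'⟩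
  simp only [lay23, Matrix.of_apply, Matrix.kroneckerMap_apply, Matrix.one_apply]
  by_cases h1 : a = a' <;> by_cases h2 : e = e' <;> simp [h1, h2]

/-- An operator on the outer factors 1 and 4 commutes with one on the middle factors. -/
lemma lay23_mul_outer (v : Matrix (α × α) (α × α) ℂ) (p q : Matrix α α ℂ) :
    lay23 v * ((p ⊗ₖ (1 : Matrix α α ℂ)) ⊗ₖ ((1 : Matrix α α ℂ) ⊗ₖ q)) =
      ((p ⊗ₖ (1 : Matrix α α ℂ)) ⊗ₖ ((1 : Matrix α α ℂ) ⊗ₖ q)) * lay23 v := by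
  have h : (p ⊗ₖ (1 : Matrix α α ℂ)) ⊗ₖ ((1 : Matrix α α ℂ) ⊗ₖ q) =
      ((1 : Matrix (α × α) (α × α) ℂ) ⊗ₖ (p ⊗ₖ q)).submatrix
        (middleFirst α) (middleFirst α) := by
    ext ⟨⟨a, b⟩, c, e⟩ ⟨⟨a', b'⟩, c', e'⟩
    simp only [middleFirst, Matrix.submatrix_apply, Equiv.coe_fn_mk, Matrix.kroneckerMap_apply,
      Matrix.one_apply, Prod.mk.injEq]
    by_cases h1 : b = b' <;> by_cases h2 : c = c' <;> simp [h1, h2]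
  rw [h, lay23_eq, Matrix.submatrix_mul_equiv, Matrix.submatrix_mul_equiv,
    ← Matrix.mul_kronecker_mul, ← Matrix.mul_kronecker_mul]
  simp

/-- The swap trick `Tr[𝕊 (a ⊗ b)] = Tr[a b]`. -/
lemma trace_swapPairs_mul (a b : Matrix (α × α) (α × α) ℂ) :
    (swapPairs α * (a ⊗ₖ b)).trace = (a * b).trace := by
  have h : ∀ p r : (α × α) × α × α,
      swapPairs α p r = if r = (p.2, p.1) then 1 else 0 := by
    intro p r
    simp only [swapPairs, Matrix.of_apply, Prod.ext_iff (x := r), eq_comm (a := r.1),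
      eq_comm (a := r.2)]
    exact if_congr and_comm rfl rfl
  simp only [Matrix.trace, Matrix.diag, Matrix.mul_apply, h, ite_mul, one_mul, zero_mul,
    Finset.sum_ite_eq', Finset.mem_univ, if_true, Matrix.kroneckerMap_apply]
  rw [Fintype.sum_prod_type, Finset.sum_comm]

end Layers

/-- The trace formula for the sign. -/
lemma TRrel.sigma_eq {d : ℕ} (hd : 1 ≤ d)
    {u v x : Matrix (Fin d × Fin d) (Fin d × Fin d) ℂ}
    (hv : v ∈ Matrix.unitaryGroup (Fin d × Fin d) ℂ)
    (hx : x ∈ Matrix.unitaryGroup (Fin d × Fin d) ℂ)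
    {σ : ℂ} (hrel : TRrel u v x σ) :
    σ = ((d : ℂ) ^ 2)⁻¹ *
        (swapPairs (Fin d) * lay23 v * lay12 u * lay34 u * lay23 v).trace := by
  have hv' : vᴴ * v = 1 := Matrix.mem_unitaryGroup_iff'.1 hv
  have hx' : x * xᴴ = 1 := Matrix.mem_unitaryGroup_iff.1 hx
  have h1 : swapPairs (Fin d) * lay23 v * lay12 u * lay34 u * lay23 v =
      σ • (swapPairs (Fin d) * (x ⊗ₖ xᴴ)) := by
    have : swapPairs (Fin d) * lay23 v * lay12 u * lay34 u * lay23 v =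
        swapPairs (Fin d) * (lay23 v * lay12 u * lay34 u) * lay23 v := by
      simp only [Matrix.mul_assoc]
    rw [this, hrel, Matrix.mul_assoc, Matrix.smul_mul, Matrix.mul_assoc (lay12 x * _),
      ← lay23_mul, hv', lay23_one, Matrix.mul_one, lay12_mul_lay34, Matrix.mul_smul]
  have hd' : (d : ℂ) ≠ 0 := by exact_mod_cast (by omega : d ≠ 0)
  rw [h1, Matrix.trace_smul, trace_swapPairs_mul, hx', Matrix.trace_one]
  simp only [Fintype.card_prod, Fintype.card_fin, smul_eq_mul, Nat.cast_mul]
  field_simp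

/-- Gauge covariance: the relation persists with the same sign and `x' = (p ⊗ 1) x (1 ⊗ q†)`. -/
lemma TRrel.gauge {α : Type*} [Fintype α] [DecidableEq α]
    {u v x : Matrix (α × α) (α × α) ℂ} {σ : ℂ} (hrel : TRrel u v x σ)
    {p q : Matrix α α ℂ} (hp : p ∈ Matrix.unitaryGroup α ℂ) (hq : q ∈ Matrix.unitaryGroup α ℂ) :
    TRrel ((p ⊗ₖ q) * u) (v * (qᴴ ⊗ₖ pᴴ))
      ((p ⊗ₖ (1 : Matrix α α ℂ)) * x * ((1 : Matrix α α ℂ) ⊗ₖ qᴴ)) σ := by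
  have hp' : pᴴ * p = 1 := Matrix.mem_unitaryGroup_iff'.1 hp
  have hq' : qᴴ * q = 1 := Matrix.mem_unitaryGroup_iff'.1 hq
  unfold TRrel at hrel ⊢
  rw [Matrix.mul_assoc, lay12_mul_lay34] at hrel
  rw [lay12_mul_lay34] at hrel
  -- Both sides equal `p₁ q₄ v₂₃ u₁₂ u₃₄`.
  have hL : lay23 (v * (qᴴ ⊗ₖ pᴴ)) * lay12 ((p ⊗ₖ q) * u) * lay34 ((p ⊗ₖ q) * u) =
      ((p ⊗ₖ (1 : Matrix α α ℂ)) ⊗ₖ ((1 : Matrix α α ℂ) ⊗ₖ q)) * (lay23 v * (u ⊗ₖ u)) := by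
    have : ((1 : Matrix α α ℂ) ⊗ₖ qᴴ) ⊗ₖ (pᴴ ⊗ₖ (1 : Matrix α α ℂ)) * ((p ⊗ₖ q) ⊗ₖ (p ⊗ₖ q)) =
        (p ⊗ₖ (1 : Matrix α α ℂ)) ⊗ₖ ((1 : Matrix α α ℂ) ⊗ₖ q) := by
      rw [← Matrix.mul_kronecker_mul, ← Matrix.mul_kronecker_mul, ← Matrix.mul_kronecker_mul,
        hp', hq', Matrix.one_mul, Matrix.one_mul]
    rw [Matrix.mul_assoc, lay12_mul_lay34, lay23_mul, lay23_kronecker, Matrix.mul_kronecker_mul,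
      Matrix.mul_assoc, ← Matrix.mul_assoc _ _ (u ⊗ₖ u), this, ← Matrix.mul_assoc,
      lay23_mul_outer, Matrix.mul_assoc]
  have hA : ((1 : Matrix α α ℂ) ⊗ₖ qᴴ) * ((1 : Matrix α α ℂ) ⊗ₖ q) = 1 := by
    rw [← Matrix.mul_kronecker_mul, hq', Matrix.one_mul, Matrix.one_kronecker_one]
  have hB : (pᴴ ⊗ₖ (1 : Matrix α α ℂ)) * (p ⊗ₖ (1 : Matrix α α ℂ)) = 1 := by
    rw [← Matrix.mul_kronecker_mul, hp', Matrix.one_mul, Matrix.one_kronecker_one]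
  rw [hL, hrel, lay12_mul_lay34]
  simp only [Matrix.conjTranspose_mul, Matrix.conjTranspose_kronecker,
    Matrix.conjTranspose_conjTranspose, Matrix.conjTranspose_one, lay23_mul, lay23_kronecker]
  rw [Matrix.mul_smul, ← Matrix.mul_assoc, ← Matrix.mul_assoc, ← Matrix.mul_kronecker_mul,
    ← Matrix.mul_kronecker_mul]
  congr 3
  · rw [Matrix.mul_assoc, hA, Matrix.mul_one]
  · rw [Matrix.mul_assoc, Matrix.mul_assoc, hB, Matrix.mul_one]

lemma continuous_lay12 {α : Type*} [Fintype α] [DecidableEq α] :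
    Continuous (lay12 (α := α)) := by
  refine continuous_matrix fun i j => ?_
  simp only [lay12, Matrix.kroneckerMap_apply]
  exact (continuous_id.matrix_elem _ _).mul continuous_const

lemma continuous_lay34 {α : Type*} [Fintype α] [DecidableEq α] :
    Continuous (lay34 (α := α)) := by
  refine continuous_matrix fun i j => ?_
  simp only [lay34, Matrix.kroneckerMap_apply]
  exact continuous_const.mul (continuous_id.matrix_elem _ _)

lemma continuous_lay23 {α : Type*} [Fintype α] [DecidableEq α] :
    Continuous (lay23 (α := α)) := by
  refine continuous_matrix fun i j => ?_
  simp only [lay23, Matrix.of_apply]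
  split_ifs
  · exact continuous_id.matrix_elem _ _
  · exact continuous_const

/-- Properties of the time-reversal sign `σ`: (a) it is given by
`σ = (1/d²) Tr[𝕊_{12,34} v₂₃ u₁₂ u₃₄ v₂₃]` (hence uniquely determined by `(u,v)`);
(b) it is unchanged under the gauge `(u,v) ↦ ((p⊗q)u, v(q†⊗p†))`;
(c) it is constant along continuous paths of pairs satisfying such a relation. -/
theorem stmt17 (d : ℕ) (hd : 1 ≤ d)
    (u v : Matrix (Fin d × Fin d) (Fin d × Fin d) ℂ)
    (hu : u ∈ Matrix.unitaryGroup (Fin d × Fin d) ℂ)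
    (hv : v ∈ Matrix.unitaryGroup (Fin d × Fin d) ℂ)
    (x : Matrix (Fin d × Fin d) (Fin d × Fin d) ℂ)
    (hx : x ∈ Matrix.unitaryGroup (Fin d × Fin d) ℂ)
    (σ : ℂ) (hσ : σ = 1 ∨ σ = -1)
    (hrel : TRrel u v x σ) :
    (σ = ((d : ℂ) ^ 2)⁻¹ *
        (swapPairs (Fin d) * lay23 v * lay12 u * lay34 u * lay23 v).trace) ∧
    (∀ p q : Matrix (Fin d) (Fin d) ℂ,
      p ∈ Matrix.unitaryGroup (Fin d) ℂ → q ∈ Matrix.unitaryGroup (Fin d) ℂ →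
      ∃ x' : Matrix (Fin d × Fin d) (Fin d × Fin d) ℂ,
        x' ∈ Matrix.unitaryGroup (Fin d × Fin d) ℂ ∧
        TRrel ((p ⊗ₖ q) * u) (v * (qᴴ ⊗ₖ pᴴ)) x' σ) ∧
    (∀ (uP vP xP : ℝ → Matrix (Fin d × Fin d) (Fin d × Fin d) ℂ) (σP : ℝ → ℂ),
      ContinuousOn uP (Set.Icc 0 1) → ContinuousOn vP (Set.Icc 0 1) →
      (∀ t ∈ Set.Icc (0:ℝ) 1,
        uP t ∈ Matrix.unitaryGroup (Fin d × Fin d) ℂ ∧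
        vP t ∈ Matrix.unitaryGroup (Fin d × Fin d) ℂ ∧
        xP t ∈ Matrix.unitaryGroup (Fin d × Fin d) ℂ ∧
        (σP t = 1 ∨ σP t = -1) ∧
        TRrel (uP t) (vP t) (xP t) (σP t)) →
      ∀ s ∈ Set.Icc (0:ℝ) 1, ∀ t ∈ Set.Icc (0:ℝ) 1, σP s = σP t) := by
  refine ⟨hrel.sigma_eq hd hv hx, fun p q hp hq => ⟨_, ?_, hrel.gauge hp hq⟩, ?_⟩
  · have hqs : qᴴ ∈ Matrix.unitaryGroup (Fin d) ℂ := Unitary.star_mem hq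
    exact mul_mem (mul_mem (Matrix.kronecker_mem_unitary hp (one_mem _)) hx)
      (Matrix.kronecker_mem_unitary (one_mem _) hqs)
  · intro uP vP xP σP hu hv h s hs t ht
    have hc : ContinuousOn σP (Set.Icc 0 1) := by
      let F : Matrix (Fin d × Fin d) (Fin d × Fin d) ℂ ×
          Matrix (Fin d × Fin d) (Fin d × Fin d) ℂ → ℂ := fun w =>
        ((d : ℂ) ^ 2)⁻¹ *
          (swapPairs (Fin d) * lay23 w.2 * lay12 w.1 * lay34 w.1 * lay23 w.2).trace
      have hF : Continuous F := by
        have h23 := (continuous_lay23 (α := Fin d)).comp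
          (continuous_snd (X := Matrix (Fin d × Fin d) (Fin d × Fin d) ℂ))
        have h12 := (continuous_lay12 (α := Fin d)).comp
          (continuous_fst (Y := Matrix (Fin d × Fin d) (Fin d × Fin d) ℂ))
        have h34 := (continuous_lay34 (α := Fin d)).comp
          (continuous_fst (Y := Matrix (Fin d × Fin d) (Fin d × Fin d) ℂ))
        exact continuous_const.mul (((((continuous_const.matrix_mul h23).matrix_mul
          h12).matrix_mul h34).matrix_mul h23).matrix_trace)
      refine (hF.comp_continuousOn (hu.prodMk hv)).congr fun r hr => ?_
      obtain ⟨-, hvr, hxr, -, hrr⟩ := h r hr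
      exact hrr.sigma_eq hd hvr hxr
    have hfin : ({1, -1} : Set ℂ).Finite := Set.toFinite _
    obtain ⟨y, -, hy⟩ := isPreconnected_Icc.eqOn_const_of_mapsTo hfin.isDiscrete hc
      (fun r hr => (h r hr).2.2.2.1) ⟨1, Or.inl rfl⟩
    exact (hy hs).trans (hy ht).symm
end
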